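/- In the Coxeter group W of type E6, for all integers i, j with 1 ≤ i < j ≤ 3, the identity x'_{5,i} · x_{4,j} · x'_{5,j} = x3 · x'_{5,i} · x_{4,j} · x'_{5,j+1} holds. -/

import Mathlib

/-- The descending product `x i * x (i-1) * ... * x j` (equal to `1` when `j > i`). -/
def descProd {G : Type*} [Group G] (x : ℤ → G) (i j : ℤ) : G :=
  ((List.range (i + 1 - j).toNat).map (fun n => x (i - (n : ℤ)))).prod

/-- The product `x i * x (i-2) * x (i-3) * ... * x j`, with the conventions
`primProd x i (i-1) = x i` and `primProd x i j = 1` for `j ≥ i`. -/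
def primProd {G : Type*} [Group G] (x : ℤ → G) (i j : ℤ) : G :=
  if i ≤ j then 1 else x i * descProd x (i - 2) j

/-!
Write `a = x n`, `c = x (n - 2)`, and `D k` for the descending product from `x (n - 3)` to `x k`.
Since `a` commutes with `D j`, the left-hand side is `a c (D i) x_{n-1} c a (D j) c (D j)`.
The chain braid relations turn `(D j) c (D j)` into `c (D j) x_{n-2,j+1}`, and now the word begins
with `a c m c a c`, where `m = (D i) x_{n-1}` commutes with `a`; applying the braid relation of
`a` and `c` twice moves the last `c` to the front. Type `E6` is the case `n = 5`.
-/

theorem mul_mul_mul_mul_mul_eq_of_braid {M : Type*} [Semigroup M] {a c m : M}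
    (hbraid : a * c * a = c * a * c) (hm : Commute a m) :
    a * c * m * c * a * c = c * a * c * m * c * a :=
  calc a * c * m * c * a * c
      = a * c * m * (c * a * c) := by simp only [mul_assoc]
    _ = a * c * (m * a) * c * a := by rw [← hbraid]; simp only [mul_assoc]
    _ = a * c * a * m * c * a := by rw [← hm.eq]; simp only [mul_assoc]
    _ = c * a * c * m * c * a := by rw [hbraid]

section Products

variable {G : Type*} [Group G] {x : ℤ → G} {i j : ℤ}

-- In `descProd` the list `List.range _` itself is coerced to a `List ℤ`, through the list monad.
theorem descProd_eq_prod_map_range :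
    descProd x i j = ((List.range (i + 1 - j).toNat).map fun n : ℕ => x (i - n)).prod := by
  simp [descProd, List.map_eq_flatMap, List.flatMap_assoc]

theorem descProd_of_lt (hij : i < j) : descProd x i j = 1 := by
  simp [descProd, show (i + 1 - j).toNat = 0 by lia]

theorem descProd_eq_mul_descProd_sub_one (hji : j ≤ i) :
    descProd x i j = x i * descProd x (i - 1) j := by
  have hlen : (i + 1 - j).toNat = (i - 1 + 1 - j).toNat + 1 := by lia
  simp [descProd_eq_prod_map_range, hlen, List.range_succ_eq_map, Function.comp_def, sub_sub,
    add_comm]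

theorem descProd_eq_descProd_add_one_mul (hji : j ≤ i) :
    descProd x i j = descProd x i (j + 1) * x j := by
  have hlen : (i + 1 - j).toNat = (i + 1 - (j + 1)).toNat + 1 := by lia
  have hlast : i - ((i + 1 - (j + 1)).toNat : ℤ) = j := by lia
  rw [descProd_eq_prod_map_range, hlen, List.range_succ, List.map_append, List.prod_append,
    List.map_singleton, List.prod_singleton, hlast, descProd_eq_prod_map_range]

theorem commute_descProd {g : G} (hg : ∀ k, j ≤ k → k ≤ i → Commute g (x k)) :
    Commute g (descProd x i j) := by
  rw [descProd_eq_prod_map_range]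
  refine Commute.list_prod_right _ _ fun y hy => ?_
  obtain ⟨n, hn, rfl⟩ := List.mem_map.1 hy
  have := List.mem_range.1 hn
  exact hg _ (by lia) (by lia)

theorem primProd_of_lt (hji : j < i) : primProd x i j = x i * descProd x (i - 2) j :=
  if_neg hji.not_ge

theorem primProd_of_le_sub_two (hji : j ≤ i - 2) :
    primProd x i j = x i * x (i - 2) * descProd x (i - 3) j := by
  rw [primProd_of_lt (by lia), descProd_eq_mul_descProd_sub_one hji, mul_assoc,
    show i - 2 - 1 = i - 3 by ring]

theorem mul_descProd_eq_descProd_mul (hji : j < i)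
    (hbraid : x (j + 1) * x j * x (j + 1) = x j * x (j + 1) * x j)
    (hcomm : ∀ k, j + 1 < k → k ≤ i → Commute (x k) (x j)) :
    x j * descProd x i j = descProd x i j * x (j + 1) := by
  have hfar : Commute (x j) (descProd x i (j + 1 + 1)) :=
    commute_descProd fun k hk hki => (hcomm k (by lia) hki).symm
  rw [descProd_eq_descProd_add_one_mul hji.le,
    descProd_eq_descProd_add_one_mul (show j + 1 ≤ i from hji)]
  calc x j * (descProd x i (j + 1 + 1) * x (j + 1) * x j)
      = x j * descProd x i (j + 1 + 1) * x (j + 1) * x j := by simp only [mul_assoc]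
    _ = descProd x i (j + 1 + 1) * (x j * x (j + 1) * x j) := by
        rw [hfar.eq]; simp only [mul_assoc]
    _ = descProd x i (j + 1 + 1) * x (j + 1) * x j * x (j + 1) := by
        rw [← hbraid]; simp only [mul_assoc]

theorem descProd_sub_one_mul_descProd {j : ℤ} (hji : j ≤ i)
    (hbraid : ∀ k, j ≤ k → k < i → x (k + 1) * x k * x (k + 1) = x k * x (k + 1) * x k)
    (hcomm : ∀ k l, j ≤ l → l + 1 < k → k ≤ i → Commute (x k) (x l)) :
    descProd x (i - 1) j * descProd x i j = descProd x i j * descProd x i (j + 1) := by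
  obtain rfl | hlt := hji.eq_or_lt
  · rw [descProd_of_lt (sub_one_lt j), descProd_of_lt (lt_add_one j), one_mul, mul_one]
  have hfar : Commute (x j) (descProd x i (j + 1 + 1)) :=
    commute_descProd fun k hk hki => (hcomm k j le_rfl (by lia) hki).symm
  have ih : descProd x (i - 1) (j + 1) * descProd x i (j + 1) =
      descProd x i (j + 1) * descProd x i (j + 1 + 1) :=
    descProd_sub_one_mul_descProd hlt (fun k hk => hbraid k (by lia))
      fun k l hl => hcomm k l (by lia)
  calc descProd x (i - 1) j * descProd x i j
      = descProd x (i - 1) (j + 1) * (x j * descProd x i j) := by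
        rw [descProd_eq_descProd_add_one_mul (show j ≤ i - 1 by lia), mul_assoc]
    _ = descProd x (i - 1) (j + 1) * descProd x i (j + 1) * x j * x (j + 1) := by
        rw [mul_descProd_eq_descProd_mul hlt (hbraid j le_rfl hlt) fun k => hcomm k j le_rfl,
          descProd_eq_descProd_add_one_mul hji]
        simp only [mul_assoc]
    _ = descProd x i (j + 1) * (x j * descProd x i (j + 1 + 1)) * x (j + 1) := by
        rw [ih, hfar.eq]; simp only [mul_assoc]
    _ = descProd x i j * descProd x i (j + 1) := by
        rw [descProd_eq_descProd_add_one_mul hji,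
          descProd_eq_descProd_add_one_mul (show j + 1 ≤ i from hlt)]
        simp only [mul_assoc]
termination_by (i - j).toNat

end Products

theorem E6_beta3_general {G : Type*} [Group G] {x : ℤ → G} {n i j : ℤ}
    (hi : i ≤ n - 2) (hj : j ≤ n - 2)
    (hchain : ∀ k, j ≤ k → k < n - 2 → x (k + 1) * x k * x (k + 1) = x k * x (k + 1) * x k)
    (hcomm : ∀ k l, j ≤ l → l + 1 < k → k ≤ n - 2 → Commute (x k) (x l))
    (hfork : x n * x (n - 2) * x n = x (n - 2) * x n * x (n - 2))
    (hcomm_fork : ∀ k, min i j ≤ k → k < n → k ≠ n - 2 → Commute (x n) (x k)) :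
    primProd x n i * descProd x (n - 1) j * primProd x n j =
      x (n - 2) * primProd x n i * descProd x (n - 1) j * primProd x n (j + 1) := by
  set a := x n
  set b := x (n - 1)
  set c := x (n - 2)
  set Di := descProd x (n - 3) i
  set Dj := descProd x (n - 3) j
  set E := descProd x (n - 2) (j + 1)
  have hcDj : descProd x (n - 2) j = c * Dj := by
    rw [descProd_eq_mul_descProd_sub_one hj, show n - 2 - 1 = n - 3 by ring]
  have hbcDj : descProd x (n - 1) j = b * (c * Dj) := by
    rw [descProd_eq_mul_descProd_sub_one (by lia), show n - 1 - 1 = n - 2 by ring, hcDj]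
  have haDj : Commute a Dj :=
    commute_descProd fun k hk hkn => hcomm_fork k (by lia) (by lia) (by lia)
  have haDi : Commute a Di :=
    commute_descProd fun k hk hkn => hcomm_fork k (by lia) (by lia) (by lia)
  have haDib : Commute a (Di * b) := haDi.mul_right (hcomm_fork _ (by lia) (by lia) (by lia))
  have hDjcDj : Dj * (c * Dj) = c * Dj * E := by
    have h := descProd_sub_one_mul_descProd hj hchain hcomm
    rwa [show n - 2 - 1 = n - 3 by ring, hcDj] at h
  rw [primProd_of_le_sub_two hi, primProd_of_le_sub_two hj, primProd_of_lt (by lia), hbcDj]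
  calc a * c * Di * (b * (c * Dj)) * (a * c * Dj)
      = a * c * Di * b * c * (Dj * a) * c * Dj := by simp only [mul_assoc]
    _ = a * c * Di * b * c * a * (Dj * (c * Dj)) := by rw [← haDj.eq]; simp only [mul_assoc]
    _ = a * c * (Di * b) * c * a * c * (Dj * E) := by rw [hDjcDj]; simp only [mul_assoc]
    _ = c * a * c * Di * b * c * (a * Dj) * E := by
        rw [mul_mul_mul_mul_mul_eq_of_braid hfork haDib]; simp only [mul_assoc]
    _ = c * (a * c * Di) * (b * (c * Dj)) * (a * E) := by rw [haDj.eq]; simp only [mul_assoc]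

theorem E6_beta3 (G : Type*) [Group G] (x : ℤ → G)
    (hsq : ∀ i : ℤ, 1 ≤ i → i ≤ 6 → x i ^ 2 = 1)
    (hbraid : ∀ i : ℤ, 1 ≤ i → i ≤ 3 → x (i+1) * x i * x (i+1) = x i * x (i+1) * x i)
    (h53 : x 5 * x 3 * x 5 = x 3 * x 5 * x 3)
    (h64 : x 6 * x 4 * x 6 = x 4 * x 6 * x 4)
    (hcomm : ∀ i j : ℤ, 1 ≤ j → j + 1 < i → i ≤ 4 → x i * x j = x j * x i)
    (hcomm5 : ∀ i : ℤ, 1 ≤ i → i ≤ 6 → i ≠ 3 → i ≠ 5 → x 5 * x i = x i * x 5)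
    (hcomm6 : ∀ i : ℤ, 1 ≤ i → i ≤ 6 → i ≠ 4 → i ≠ 6 → x 6 * x i = x i * x 6) :
    ∀ i j : ℤ, 1 ≤ i → i < j → j ≤ 3 →
      primProd x 5 i * descProd x 4 j * primProd x 5 j = x 3 * primProd x 5 i * descProd x 4 j * primProd x 5 (j+1) := by
  intro i j hi hij hj
  exact E6_beta3_general (n := 5) (by lia) hj (fun k hk hk3 => hbraid k (by lia) (by lia))
    (fun k l hl hlk hk => hcomm k l (by lia) hlk (by lia)) h53
    fun k hk hk5 hk3 => hcomm5 k (by lia) (by lia) hk3 (by lia)
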